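/- For integers n ≥ 2, i and m with 2 ≤ i ≤ 2n and 1 ≤ m ≤ ⌊i/2⌋, let N be the number of partitions of the vertex set of the cycle graph on 2n vertices into exactly i blocks, each inducing a connected subgraph, such that exactly 2m of the blocks have odd cardinality. Then i · N = 2n · C(i, 2m) · C(n+m−1, i−1); equivalently, N = (2n/i) · C(i,2m) · C(n+m−1, i−1). -/

import Mathlib

/-- The cycle graph `O_{2n}` on the vertex set `{1,…,2n}`: consecutive integers
are adjacent, and `1` is adjacent to `2n`. -/
def cycleGraph (n : ℕ) : SimpleGraph ℕ :=
  SimpleGraph.fromRel (fun x y => x + 1 = y ∨ (x = 1 ∧ y = 2 * n))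

/-- `π` is a partition of the finite set `s`: blocks are nonempty subsets of `s`
and each element of `s` lies in exactly one block. -/
def IsPartitionOn (s : Finset ℕ) (π : Finset (Finset ℕ)) : Prop :=
  (∀ B ∈ π, B.Nonempty) ∧ (∀ B ∈ π, B ⊆ s) ∧ ∀ x ∈ s, ∃! B, B ∈ π ∧ x ∈ B

/-- A block is connected if it induces a connected subgraph of `G`. -/
def BlockConnected (G : SimpleGraph ℕ) (B : Finset ℕ) : Prop :=
  (G.induce (B : Set ℕ)).Connected

/-- A connected partition of `s` with respect to the graph `G`. -/
def IsConnectedPartition (s : Finset ℕ) (G : SimpleGraph ℕ) (π : Finset (Finset ℕ)) : Prop :=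
  IsPartitionOn s π ∧ ∀ B ∈ π, BlockConnected G B

/-- The comparability graph of the relation `le`. -/
def compGraph (le : ℕ → ℕ → Prop) : SimpleGraph ℕ := SimpleGraph.fromRel le

/-!
Call a vertex `s` of the cycle on `{1, …, N}` an *end* of a partition if its block does not contain
the vertex after `s`. In a connected partition with `i ≥ 2` blocks every block has exactly one end,
and by rotation all `N` vertices are ends of equally many of the partitions to be counted. So `i`
times the number of these partitions is `N` times the number of those with an end at `N`, and the
latter are the partitions of `{1, …, N}` into intervals, i.e. the compositions of `N`.

A composition `(aⱼ)` of `N` into `i` parts, `k` of them odd, amounts to the set of positions of its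
odd parts together with the numbers `⌊(aⱼ - 1) / 2⌋`, which are arbitrary natural numbers with sum
`(N + k) / 2 - i`.
-/

/-! ### Partitions of finite sets of natural numbers -/

section

open Finset

variable {s B C : Finset ℕ} {π : Finset (Finset ℕ)}

lemma IsPartitionOn.nonempty (h : IsPartitionOn s π) (hB : B ∈ π) : B.Nonempty :=
  h.1 B hB

lemma IsPartitionOn.subset (h : IsPartitionOn s π) (hB : B ∈ π) : B ⊆ s :=
  h.2.1 B hB

lemma IsPartitionOn.exists_mem {x : ℕ} (h : IsPartitionOn s π) (hx : x ∈ s) : ∃ B ∈ π, x ∈ B :=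
  (h.2.2 x hx).exists

lemma IsPartitionOn.eq_of_mem {x : ℕ} (h : IsPartitionOn s π) (hB : B ∈ π) (hC : C ∈ π)
    (hxB : x ∈ B) (hxC : x ∈ C) : B = C :=
  (h.2.2 x (h.subset hB hxB)).unique ⟨hB, hxB⟩ ⟨hC, hxC⟩

lemma IsPartitionOn.ne_of_one_lt_card (h : IsPartitionOn s π) (hπ : 1 < #π) (hB : B ∈ π) :
    B ≠ s := by
  rintro rfl
  obtain ⟨C, hC, hne⟩ := exists_mem_ne hπ B
  obtain ⟨x, hx⟩ := h.nonempty hC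
  exact hne (h.eq_of_mem hC hB hx (h.subset hC hx))

lemma IsPartitionOn.insert (h : IsPartitionOn s π) (hB : B.Nonempty) (hd : Disjoint s B) :
    IsPartitionOn (s ∪ B) (insert B π) := by
  obtain ⟨h1, h2, h3⟩ := h
  rw [Finset.disjoint_left] at hd
  refine ⟨by grind, by grind, fun x hx => ?_⟩
  grind [ExistsUnique]

lemma IsPartitionOn.erase (h : IsPartitionOn s π) (hB : B ∈ π) :
    IsPartitionOn (s \ B) (π.erase B) := by
  refine ⟨fun C hC => h.nonempty (mem_of_mem_erase hC), fun C hC x hx => ?_, fun x hx => ?_⟩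
  · have := h.subset (mem_of_mem_erase hC) hx
    grind [h.eq_of_mem hB (mem_of_mem_erase hC)]
  · obtain ⟨C, hC⟩ := h.2.2 x (mem_sdiff.1 hx).1
    exact ⟨C, by grind, by grind⟩

lemma finite_setOf_isPartitionOn (s : Finset ℕ) : {π | IsPartitionOn s π}.Finite :=
  s.powerset.powerset.finite_toSet.subset fun _ h =>
    mem_powerset.2 fun _ hB => mem_powerset.2 (h.subset hB)

lemma apply_mem_finsetCongr {α β : Type*} (e : α ≃ β) {a : α} {s : Finset α} :
    e a ∈ e.finsetCongr s ↔ a ∈ s := by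
  rw [Equiv.finsetCongr_apply, mem_map_equiv, e.symm_apply_apply]

lemma isPartitionOn_finsetCongr_iff (σ : Equiv.Perm ℕ) :
    IsPartitionOn (σ.finsetCongr s) (σ.finsetCongr.finsetCongr π) ↔ IsPartitionOn s π := by
  refine (and_congr (σ.finsetCongr.forall_congr fun B => ?_)
    (and_congr (σ.finsetCongr.forall_congr fun B => ?_) (σ.forall_congr fun x => ?_))).symm
  · rw [apply_mem_finsetCongr, Equiv.finsetCongr_apply, map_nonempty]
  · rw [apply_mem_finsetCongr, Equiv.finsetCongr_apply, Equiv.finsetCongr_apply, map_subset_map]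
  · refine imp_congr (apply_mem_finsetCongr σ).symm (σ.finsetCongr.existsUnique_congr fun {B} => ?_)
    rw [apply_mem_finsetCongr, apply_mem_finsetCongr]

/-- The multiset of block cardinalities of a partition. -/
def blockSizes (π : Finset (Finset ℕ)) : Multiset ℕ :=
  π.val.map card

lemma card_blockSizes (π : Finset (Finset ℕ)) : (blockSizes π).card = #π :=
  Multiset.card_map _ _

lemma countP_blockSizes (p : ℕ → Prop) [DecidablePred p] (π : Finset (Finset ℕ)) :
    (blockSizes π).countP p = #{B ∈ π | p #B} :=
  Multiset.countP_map _ _ _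

lemma blockSizes_insert (hB : B ∉ π) : blockSizes (insert B π) = #B ::ₘ blockSizes π := by
  rw [blockSizes, insert_val_of_notMem hB, Multiset.map_cons, blockSizes]

lemma blockSizes_finsetCongr (σ : Equiv.Perm ℕ) (π : Finset (Finset ℕ)) :
    blockSizes (σ.finsetCongr.finsetCongr π) = blockSizes π := by
  simp [blockSizes, Function.comp_def]

variable {G H : SimpleGraph ℕ}

lemma BlockConnected.forall_mem_of_adj (hB : BlockConnected G B) {p : ℕ → Prop}
    (hp : ∀ u ∈ B, ∀ v ∈ B, G.Adj u v → p u → p v) {x : ℕ} (hx : x ∈ B) (hpx : p x) :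
    ∀ y ∈ B, p y := by
  intro y hy
  obtain ⟨w⟩ := hB.preconnected ⟨x, hx⟩ ⟨y, hy⟩
  by_contra hpy
  obtain ⟨d, -, hd, hd'⟩ := w.exists_boundary_dart {u | p u} hpx hpy
  exact hd' (hp _ d.fst.2 _ d.snd.2 d.adj hd)

lemma blockConnected_finsetCongr_iff {σ : Equiv.Perm ℕ}
    (h : ∀ x ∈ B, ∀ y ∈ B, H.Adj (σ x) (σ y) ↔ G.Adj x y) :
    BlockConnected H (σ.finsetCongr B) ↔ BlockConnected G B :=
  (SimpleGraph.Iso.connected_iff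
    { toEquiv := σ.subtypeEquiv fun _ => (apply_mem_finsetCongr σ).symm
      map_rel_iff' := fun {x y} => h x x.2 y y.2 }).symm

lemma isConnectedPartition_finsetCongr_iff {σ : Equiv.Perm ℕ}
    (h : ∀ x ∈ s, ∀ y ∈ s, H.Adj (σ x) (σ y) ↔ G.Adj x y) :
    IsConnectedPartition (σ.finsetCongr s) H (σ.finsetCongr.finsetCongr π) ↔
      IsConnectedPartition s G π := by
  rw [IsConnectedPartition, isPartitionOn_finsetCongr_iff, ← σ.finsetCongr.forall_congr_right]
  simp only [apply_mem_finsetCongr]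
  exact and_congr_right fun hπ => forall₂_congr fun B hB =>
    blockConnected_finsetCongr_iff fun x hx y hy => h x (hπ.subset hB hx) y (hπ.subset hB hy)

end

/-! ### Ends of the blocks of a connected partition of a cycle -/

section

open Finset

variable {N i s x y : ℕ} {B : Finset ℕ} {π : Finset (Finset ℕ)}

/-- The cycle graph on `{1, …, N}`, the analogue of `cycleGraph` for cycles of any length. -/
def cyclicGraph (N : ℕ) : SimpleGraph ℕ :=
  SimpleGraph.fromRel fun x y => x + 1 = y ∨ (x = 1 ∧ y = N)

/-- The rotation `1 ↦ 2 ↦ ⋯ ↦ N ↦ 1` of the cycle, fixing every natural number outside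
`{1, …, N}`. -/
def cyclicSucc (N : ℕ) : Equiv.Perm ℕ where
  toFun x := if x = 0 ∨ N < x then x else if x = N then 1 else x + 1
  invFun x := if x = 0 ∨ N < x then x else if x = 1 then N else x - 1
  left_inv x := by grind
  right_inv x := by grind

lemma cyclicSucc_apply (hx : x ∈ Icc 1 N) : cyclicSucc N x = if x = N then 1 else x + 1 := by
  rw [mem_Icc] at hx
  exact if_neg (by lia)

lemma cyclicSucc_of_lt (hx : 1 ≤ x) (hxN : x < N) : cyclicSucc N x = x + 1 := by
  rw [cyclicSucc_apply (mem_Icc.2 ⟨hx, hxN.le⟩), if_neg hxN.ne]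

lemma cyclicSucc_self (hN : 1 ≤ N) : cyclicSucc N N = 1 := by
  rw [cyclicSucc_apply (mem_Icc.2 ⟨hN, le_rfl⟩), if_pos rfl]

lemma cyclicSucc_mem_Icc_iff : cyclicSucc N x ∈ Icc 1 N ↔ x ∈ Icc 1 N := by
  grind [cyclicSucc, Equiv.coe_fn_mk]

lemma finsetCongr_cyclicSucc_Icc : (cyclicSucc N).finsetCongr (Icc 1 N) = Icc 1 N := by
  ext x
  obtain ⟨x, rfl⟩ := (cyclicSucc N).surjective x
  rw [apply_mem_finsetCongr, cyclicSucc_mem_Icc_iff]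

lemma cyclicGraph_adj_iff (hx : x ∈ Icc 1 N) (hy : y ∈ Icc 1 N) :
    (cyclicGraph N).Adj x y ↔ x ≠ y ∧ (cyclicSucc N x = y ∨ cyclicSucc N y = x) := by
  rw [cyclicGraph, SimpleGraph.fromRel_adj, cyclicSucc_apply hx, cyclicSucc_apply hy]
  rw [mem_Icc] at hx hy
  lia

lemma cyclicGraph_adj_cyclicSucc_iff (hx : x ∈ Icc 1 N) (hy : y ∈ Icc 1 N) :
    (cyclicGraph N).Adj (cyclicSucc N x) (cyclicSucc N y) ↔ (cyclicGraph N).Adj x y := by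
  rw [cyclicGraph_adj_iff hx hy,
    cyclicGraph_adj_iff (cyclicSucc_mem_Icc_iff.2 hx) (cyclicSucc_mem_Icc_iff.2 hy)]
  simp only [ne_eq, EmbeddingLike.apply_eq_iff_eq]

/-- `s` is an end of `π` if the block of `s` stops at `s`, i.e. does not contain the cyclic
successor of `s`. -/
def IsEnd (N : ℕ) (π : Finset (Finset ℕ)) (s : ℕ) : Prop :=
  ∀ B ∈ π, s ∈ B → cyclicSucc N s ∉ B

lemma isEnd_finsetCongr_iff :
    IsEnd N ((cyclicSucc N).finsetCongr.finsetCongr π) (cyclicSucc N s) ↔ IsEnd N π s := by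
  rw [IsEnd, ← (cyclicSucc N).finsetCongr.forall_congr_right]
  simp only [apply_mem_finsetCongr, IsEnd]

lemma exists_cyclicSucc_notMem (hB : B.Nonempty) (hBN : B ⊂ Icc 1 N) :
    ∃ x ∈ B, cyclicSucc N x ∉ B := by
  by_contra! h
  have mem_of_le : ∀ x ∈ B, ∀ y, x ≤ y → y ≤ N → y ∈ B := by
    intro x hx y hxy
    induction y, hxy using Nat.le_induction with
    | base => exact fun _ => hx
    | succ y hxy ih =>
      intro hy
      have hx1 := (mem_Icc.1 (hBN.1 hx)).1
      exact cyclicSucc_of_lt (hx1.trans hxy) hy ▸ h y (ih (by lia))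
  obtain ⟨x, hx⟩ := hB
  have hxN := mem_Icc.1 (hBN.1 hx)
  have hN : N ∈ B := mem_of_le x hx N hxN.2 le_rfl
  have h1 : 1 ∈ B := cyclicSucc_self (hxN.1.trans hxN.2) ▸ h N hN
  exact hBN.2 fun y hy => mem_of_le 1 h1 y (mem_Icc.1 hy).1 (mem_Icc.1 hy).2

lemma BlockConnected.eq_of_cyclicSucc_notMem (hB : BlockConnected (cyclicGraph N) B)
    (hBN : B ⊆ Icc 1 N) (hx : x ∈ B) (hy : y ∈ B) (hx' : cyclicSucc N x ∉ B)
    (hy' : cyclicSucc N y ∉ B) : x = y := by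
  wlog hxy : x < y generalizing x y
  · grind
  -- The only edges leaving `{x + 1, …, y}` are from `x` and `y` to their successors.
  have mem_Ioc : ∀ u ∈ B, x < u ∧ u ≤ y := by
    refine hB.forall_mem_of_adj (fun u hu v hv huv hxuy => ?_) hy ⟨hxy, le_rfl⟩
    rw [cyclicGraph_adj_iff (hBN hu) (hBN hv)] at huv
    have hu' := mem_Icc.1 (hBN hu)
    have hv' := mem_Icc.1 (hBN hv)
    obtain ⟨-, rfl | rfl⟩ := huv
    · have huy : u ≠ y := by rintro rfl; exact hy' hv
      have hyN := mem_Icc.1 (hBN hy)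
      rw [cyclicSucc_of_lt hu'.1 (by lia)] at hv' ⊢
      lia
    · have hvx : v ≠ x := by rintro rfl; exact hx' hu
      rw [cyclicSucc_apply (hBN hv)] at hxuy
      grind
  exact absurd (mem_Ioc x hx).1 (lt_irrefl x)

lemma IsConnectedPartition.card_filter_isEnd [DecidablePred (IsEnd N π)]
    (hπ : IsConnectedPartition (Icc 1 N) (cyclicGraph N) π) (hcard : 1 < #π) :
    #{s ∈ Icc 1 N | IsEnd N π s} = #π := by
  have exists_end (B) (hB : B ∈ π) : ∃ x ∈ B, cyclicSucc N x ∉ B :=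
    exists_cyclicSucc_notMem (hπ.1.nonempty hB)
      ((hπ.1.subset hB).ssubset_of_ne (hπ.1.ne_of_one_lt_card hcard hB))
  choose! e he he' using exists_end
  refine (card_bij (fun B _ => e B) (fun B hB => ?_) (fun B hB C hC heq => ?_)
    (fun s hs => ?_)).symm
  · refine mem_filter.2 ⟨hπ.1.subset hB (he B hB), fun C hC hmem => ?_⟩
    exact hπ.1.eq_of_mem hB hC (he B hB) hmem ▸ he' B hB
  · exact hπ.1.eq_of_mem hB hC (he B hB) (heq ▸ he C hC)
  · obtain ⟨hsN, hs⟩ := mem_filter.1 hs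
    obtain ⟨B, hB, hsB⟩ := hπ.1.exists_mem hsN
    exact ⟨B, hB, (hπ.2 B hB).eq_of_cyclicSucc_notMem (hπ.1.subset hB) (he B hB) hsB (he' B hB)
      (hs B hB hsB)⟩

lemma ncard_isEnd_cyclicSucc (P : Multiset ℕ → Prop) :
    {π | IsConnectedPartition (Icc 1 N) (cyclicGraph N) π ∧ P (blockSizes π) ∧
      IsEnd N π (cyclicSucc N s)}.ncard =
    {π | IsConnectedPartition (Icc 1 N) (cyclicGraph N) π ∧ P (blockSizes π) ∧
      IsEnd N π s}.ncard := by
  refine (Set.ncard_congr' ((cyclicSucc N).finsetCongr.finsetCongr.subtypeEquiv fun π => ?_)).symm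
  have hrot : IsConnectedPartition (Icc 1 N) (cyclicGraph N)
      ((cyclicSucc N).finsetCongr.finsetCongr π) ↔
        IsConnectedPartition (Icc 1 N) (cyclicGraph N) π := by
    conv_lhs => rw [← finsetCongr_cyclicSucc_Icc]
    exact isConnectedPartition_finsetCongr_iff fun x hx y hy =>
      cyclicGraph_adj_cyclicSucc_iff hx hy
  simp only [Set.mem_ofPred_eq, hrot, blockSizes_finsetCongr, isEnd_finsetCongr_iff]

lemma ncard_isEnd_eq (P : Multiset ℕ → Prop) (hs : 1 ≤ s) (hsN : s ≤ N) :
    {π | IsConnectedPartition (Icc 1 N) (cyclicGraph N) π ∧ P (blockSizes π) ∧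
      IsEnd N π s}.ncard =
    {π | IsConnectedPartition (Icc 1 N) (cyclicGraph N) π ∧ P (blockSizes π) ∧
      IsEnd N π N}.ncard := by
  rw [← ncard_isEnd_cyclicSucc (s := N), cyclicSucc_self (hs.trans hsN)]
  induction s, hs using Nat.le_induction with
  | base => rfl
  | succ s hs ih =>
    rw [← cyclicSucc_of_lt hs hsN, ncard_isEnd_cyclicSucc, ih (by lia)]

lemma mul_ncard_isConnectedPartition_eq_mul_ncard_isEnd {P : Multiset ℕ → Prop} (hi : 1 < i)
    (hP : ∀ M, P M → M.card = i) :
    i * {π | IsConnectedPartition (Icc 1 N) (cyclicGraph N) π ∧ P (blockSizes π)}.ncard =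
      N * {π | IsConnectedPartition (Icc 1 N) (cyclicGraph N) π ∧ P (blockSizes π) ∧
        IsEnd N π N}.ncard := by
  classical
  have hfin : {π | IsConnectedPartition (Icc 1 N) (cyclicGraph N) π ∧ P (blockSizes π)}.Finite :=
    (finite_setOf_isPartitionOn (Icc 1 N)).subset fun π hπ => hπ.1.1
  have hcount : #hfin.toFinset * i = #(Icc 1 N) *
      {π | IsConnectedPartition (Icc 1 N) (cyclicGraph N) π ∧ P (blockSizes π) ∧
        IsEnd N π N}.ncard := by
    refine card_mul_eq_card_mul (IsEnd N) (fun π hπ => ?_) (fun s hs => ?_)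
    · obtain ⟨hconn, hPπ⟩ := hfin.mem_toFinset.1 hπ
      have hcard : #π = i := by rw [← card_blockSizes, hP _ hPπ]
      exact (hconn.card_filter_isEnd (by lia)).trans hcard
    · obtain ⟨hs1, hsN⟩ := mem_Icc.1 hs
      rw [← ncard_isEnd_eq P hs1 hsN, ← Set.ncard_coe_finset]
      congr 1
      ext π
      simp [and_assoc]
  rwa [Nat.card_Icc, Nat.add_sub_cancel, ← Set.ncard_eq_toFinset_card _ hfin, mul_comm] at hcount

end

/-! ### Interval partitions and compositions -/

section

open Finset

variable {N i : ℕ} {B : Finset ℕ} {π : Finset (Finset ℕ)} {l l' : List ℕ}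

/-- A partition of `s` all of whose blocks are intervals of `ℕ`. -/
def IsIntervalPartition (s : Finset ℕ) (π : Finset (Finset ℕ)) : Prop :=
  IsPartitionOn s π ∧ ∀ B ∈ π, (B : Set ℕ).OrdConnected

lemma BlockConnected.ordConnected (hB : BlockConnected (cyclicGraph N) B)
    (hN : N ∈ B → 1 ∉ B) : (B : Set ℕ).OrdConnected := by
  refine ⟨fun x hx y hy z ⟨hxz, hzy⟩ => ?_⟩
  by_contra hz
  rw [mem_coe] at hx hy hz
  refine hzy.not_gt (hB.forall_mem_of_adj (p := (· < z)) (fun u hu v hv huv huz => ?_) hx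
    (hxz.lt_of_ne (by grind)) y hy)
  rw [cyclicGraph, SimpleGraph.fromRel_adj] at huv
  grind

lemma blockConnected_of_ordConnected {G : SimpleGraph ℕ} (hG : ∀ x, G.Adj x (x + 1))
    (hne : B.Nonempty) (hB : (B : Set ℕ).OrdConnected) : BlockConnected G B := by
  have reachable_min (y : ℕ) (hxy : B.min' hne ≤ y) : ∀ hy : y ∈ B,
      (G.induce (B : Set ℕ)).Reachable ⟨B.min' hne, B.min'_mem hne⟩ ⟨y, hy⟩ := by
    induction y, hxy using Nat.le_induction with
    | base => exact fun _ => .rfl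
    | succ y hxy ih =>
      intro hy
      have hyB : y ∈ B := hB.out (B.min'_mem hne) hy ⟨hxy, y.le_succ⟩
      exact (ih hyB).trans (SimpleGraph.Adj.reachable (hG y))
  exact (SimpleGraph.connected_iff_exists_forall_reachable _).2
    ⟨⟨B.min' hne, B.min'_mem hne⟩, fun y => reachable_min y (B.min'_le y y.2) y.2⟩

lemma cyclicGraph_adj_add_one (x : ℕ) : (cyclicGraph N).Adj x (x + 1) := by
  simp [cyclicGraph]

lemma isConnectedPartition_and_isEnd_iff (hπ : 1 < #π) :
    IsConnectedPartition (Icc 1 N) (cyclicGraph N) π ∧ IsEnd N π N ↔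
      IsIntervalPartition (Icc 1 N) π := by
  have cyclicSucc_eq {B} (hB : B ⊆ Icc 1 N) (hN : N ∈ B) : cyclicSucc N N = 1 :=
    cyclicSucc_self (mem_Icc.1 (hB hN)).1
  constructor
  · rintro ⟨⟨hpart, hconn⟩, hend⟩
    refine ⟨hpart, fun B hB => (hconn B hB).ordConnected fun hN => ?_⟩
    exact cyclicSucc_eq (hpart.subset hB) hN ▸ hend B hB hN
  · rintro ⟨hpart, hord⟩
    refine ⟨⟨hpart, fun B hB => ?_⟩, fun B hB hN h1 => hpart.ne_of_one_lt_card hπ hB ?_⟩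
    · exact blockConnected_of_ordConnected cyclicGraph_adj_add_one (hpart.nonempty hB) (hord B hB)
    · rw [cyclicSucc_eq (hpart.subset hB) hN] at h1
      refine (hpart.subset hB).antisymm fun x hx => ?_
      exact (hord B hB).out h1 hN (mem_Icc.1 hx)

/-- The partition of `{1, …, l.sum}` into consecutive intervals whose lengths, from the topmost
interval down, are the entries of `l`, which should be positive. -/
def intervalBlocks : List ℕ → Finset (Finset ℕ)
  | [] => ∅
  | a :: l => insert (Icc (l.sum + 1) (l.sum + a)) (intervalBlocks l)

lemma isIntervalPartition_intervalBlocks (hl : ∀ a ∈ l, 0 < a) :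
    IsIntervalPartition (Icc 1 l.sum) (intervalBlocks l) := by
  induction l with
  | nil => simp [IsIntervalPartition, IsPartitionOn, intervalBlocks]
  | cons a l ih =>
    rw [List.forall_mem_cons] at hl
    obtain ⟨hpart, hord⟩ := ih hl.2
    have hunion : Icc 1 (a :: l).sum = Icc 1 l.sum ∪ Icc (l.sum + 1) (l.sum + a) := by
      grind
    have hdisj : Disjoint (Icc 1 l.sum) (Icc (l.sum + 1) (l.sum + a)) := by
      rw [Finset.disjoint_left]
      grind
    refine ⟨hunion ▸ hpart.insert (nonempty_Icc.2 (by lia)) hdisj, ?_⟩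
    rw [intervalBlocks, forall_mem_insert, coe_Icc]
    exact ⟨Set.ordConnected_Icc, hord⟩

lemma Icc_notMem_intervalBlocks {a : ℕ} (ha : 0 < a) (hl : ∀ b ∈ l, 0 < b) :
    Icc (l.sum + 1) (l.sum + a) ∉ intervalBlocks l := fun h => by
  have := (isIntervalPartition_intervalBlocks hl).1.subset h (left_mem_Icc.2 (by lia))
  grind

lemma blockSizes_intervalBlocks (hl : ∀ a ∈ l, 0 < a) : blockSizes (intervalBlocks l) = l := by
  induction l with
  | nil => rfl
  | cons a l ih =>
    rw [List.forall_mem_cons] at hl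
    rw [intervalBlocks, blockSizes_insert (Icc_notMem_intervalBlocks hl.1 hl.2), ih hl.2,
      Nat.card_Icc, Multiset.cons_coe]
    congr 2
    lia

lemma IsPartitionOn.eq_of_Icc_mem {s : Finset ℕ} {M M' : ℕ} (h : IsPartitionOn s π) (hM : M < N)
    (hM' : M' < N) (hmem : Icc (M + 1) N ∈ π) (hmem' : Icc (M' + 1) N ∈ π) : M = M' := by
  have heq := h.eq_of_mem hmem hmem' (right_mem_Icc.2 hM) (right_mem_Icc.2 hM')
  have hle := (mem_Icc.1 (heq ▸ left_mem_Icc.2 hM)).1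
  have hle' := (mem_Icc.1 (heq.symm ▸ left_mem_Icc.2 hM')).1
  lia

lemma intervalBlocks_injOn : Set.InjOn intervalBlocks {l | ∀ a ∈ l, 0 < a} := by
  intro l hl l' hl' h
  have hperm : (l : Multiset ℕ) = l' := by
    rw [← blockSizes_intervalBlocks hl, h, blockSizes_intervalBlocks hl']
  have hsum : l.sum = l'.sum := congrArg Multiset.sum hperm
  induction l generalizing l' with
  | nil => exact (Multiset.coe_eq_zero l').1 hperm.symm |>.symm
  | cons a l ih =>
    cases l' with
    | nil => exact (Multiset.coe_eq_zero _).1 hperm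
    | cons b l' =>
      have hpos := List.forall_mem_cons.1 hl
      have hpos' := List.forall_mem_cons.1 hl'
      rw [List.sum_cons, List.sum_cons] at hsum
      rw [intervalBlocks, intervalBlocks] at h
      have hmem : Icc (l.sum + 1) (l.sum + a) ∈ intervalBlocks (a :: l) := mem_insert_self _ _
      have hmem' : Icc (l'.sum + 1) (l.sum + a) ∈ intervalBlocks (a :: l) := by
        have hend : l.sum + a = l'.sum + b := by lia
        rw [intervalBlocks, h, hend]
        exact mem_insert_self _ _
      have htailsum : l.sum = l'.sum := (isIntervalPartition_intervalBlocks hl).1.eq_of_Icc_mem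
        (by lia) (by lia) hmem hmem'
      obtain rfl : a = b := by lia
      have htail : intervalBlocks l = intervalBlocks l' := by
        rw [← erase_insert (Icc_notMem_intervalBlocks hpos.1 hpos.2), h, htailsum,
          erase_insert (Icc_notMem_intervalBlocks hpos'.1 hpos'.2)]
      exact congrArg (a :: ·) (ih hpos.2 hpos'.2 htail
        ((Multiset.cons_inj_right a).1 hperm) htailsum)

lemma IsIntervalPartition.exists_Icc_mem (h : IsIntervalPartition (Icc 1 N) π) (hN : 0 < N) :
    ∃ M < N, Icc (M + 1) N ∈ π := by
  obtain ⟨B, hB, hNB⟩ := h.1.exists_mem (right_mem_Icc.2 hN)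
  have hmin := B.min'_mem ⟨N, hNB⟩
  have hminN := mem_Icc.1 (h.1.subset hB hmin)
  refine ⟨B.min' ⟨N, hNB⟩ - 1, by lia, ?_⟩
  rw [Nat.sub_add_cancel hminN.1]
  convert hB
  refine subset_antisymm (fun x hx => (h.2 B hB).out hmin hNB (mem_Icc.1 hx)) fun x hx => ?_
  exact mem_Icc.2 ⟨B.min'_le x hx, (mem_Icc.1 (h.1.subset hB hx)).2⟩

lemma IsIntervalPartition.exists_intervalBlocks_eq (h : IsIntervalPartition (Icc 1 N) π) :
    ∃ l : List ℕ, (∀ a ∈ l, 0 < a) ∧ l.sum = N ∧ intervalBlocks l = π := by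
  induction N using Nat.strong_induction_on generalizing π with
  | _ N ih =>
    rcases N.eq_zero_or_pos with rfl | hN
    · refine ⟨[], by simp, rfl, (eq_empty_of_forall_notMem fun B hB => ?_).symm⟩
      exact (h.1.nonempty hB).ne_empty (subset_empty.1 (h.1.subset hB))
    · obtain ⟨M, hM, hmem⟩ := h.exists_Icc_mem hN
      have hsdiff : Icc 1 N \ Icc (M + 1) N = Icc 1 M := by grind
      obtain ⟨l, hl, rfl, hlπ⟩ := ih M hM
        ⟨hsdiff ▸ h.1.erase hmem, fun B hB => h.2 B (mem_of_mem_erase hB)⟩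
      refine ⟨(N - l.sum) :: l, List.forall_mem_cons.2 ⟨by lia, hl⟩, ?_, ?_⟩
      · rw [List.sum_cons, Nat.sub_add_cancel hM.le]
      · rw [intervalBlocks, Nat.add_sub_cancel' hM.le, hlπ, insert_erase hmem]

lemma ncard_isIntervalPartition (P : Multiset ℕ → Prop) :
    {π | IsIntervalPartition (Icc 1 N) π ∧ P (blockSizes π)}.ncard =
      {c : Composition N | P c.blocks}.ncard := by
  symm
  refine Set.ncard_congr (fun c _ => intervalBlocks c.blocks) (fun c hc => ?_)
    (fun c c' _ _ h => ?_) ?_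
  · have hpart := isIntervalPartition_intervalBlocks fun _ => c.blocks_pos
    rw [c.blocks_sum] at hpart
    exact ⟨hpart, by rwa [blockSizes_intervalBlocks fun _ => c.blocks_pos]⟩
  · exact Composition.ext (intervalBlocks_injOn (fun _ => c.blocks_pos) (fun _ => c'.blocks_pos) h)
  · rintro π ⟨hπ, hP⟩
    obtain ⟨l, hl, rfl, rfl⟩ := hπ.exists_intervalBlocks_eq
    rw [blockSizes_intervalBlocks hl] at hP
    exact ⟨⟨l, fun {a} => hl a, rfl⟩, hP, rfl⟩

lemma mul_ncard_isConnectedPartition_eq_mul_ncard_composition {P : Multiset ℕ → Prop} (hi : 1 < i)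
    (hP : ∀ M, P M → M.card = i) :
    i * {π | IsConnectedPartition (Icc 1 N) (cyclicGraph N) π ∧ P (blockSizes π)}.ncard =
      N * {c : Composition N | P c.blocks}.ncard := by
  rw [mul_ncard_isConnectedPartition_eq_mul_ncard_isEnd hi hP, ← ncard_isIntervalPartition]
  congr 2
  ext π
  rw [Set.mem_ofPred_eq, Set.mem_ofPred_eq, and_left_comm, and_comm]
  refine and_congr_left fun hPπ => isConnectedPartition_and_isEnd_iff ?_
  rwa [← card_blockSizes, hP _ hPπ]

end

/-! ### Compositions with a given number of odd parts -/

section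

open Finset

lemma card_piAntidiag_univ (ι : Type*) [Fintype ι] [DecidableEq ι] (r : ℕ) :
    #(piAntidiag (univ : Finset ι) r) = (Fintype.card ι + r - 1).choose r := by
  rw [← map_sym_eq_piAntidiag, card_map, sym_univ, card_univ, Sym.card_sym_eq_choose]

variable {ι : Type*} [Fintype ι] {N i k r t : ℕ}

lemma sum_add_card_filter_odd {a : ι → ℕ} (ha : ∀ j, 0 < a j) :
    ∑ j, a j + #{j | Odd (a j)} = 2 * (∑ j, (a j - 1) / 2 + Fintype.card ι) := by
  have add_ite_odd (m : ℕ) (hm : 0 < m) :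
      m + (if Odd m then 1 else 0) = 2 * ((m - 1) / 2 + 1) := by grind
  rw [card_filter, ← sum_add_distrib, ← card_univ, card_eq_sum_ones, ← sum_add_distrib, mul_sum]
  exact sum_congr rfl fun j _ => add_ite_odd (a j) (ha j)

lemma ncard_pos_sum_eq_card_odd (h : N + k = 2 * (r + Fintype.card ι)) :
    {a : ι → ℕ | (∀ j, 0 < a j) ∧ ∑ j, a j = N ∧ #{j | Odd (a j)} = k}.ncard =
      (Fintype.card ι).choose k * (Fintype.card ι + r - 1).choose r := by
  classical
  let oddSet (a : ι → ℕ) : Finset ι := {j | Odd (a j)}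
  let halves (a : ι → ℕ) (j : ι) : ℕ := (a j - 1) / 2
  rw [← card_piAntidiag_univ, ← card_univ, ← card_powersetCard, ← card_product,
    ← Set.ncard_coe_finset]
  refine Set.ncard_congr (fun a _ => (oddSet a, halves a)) ?_ ?_ ?_
  · rintro a ⟨ha, hsum, hodd⟩
    have := sum_add_card_filter_odd ha
    simp only [coe_product, Set.mem_prod, mem_coe, mem_powersetCard_univ, mem_piAntidiag]
    exact ⟨hodd, by grind, by simp⟩
  · rintro a a' ⟨ha, -⟩ ⟨ha', -⟩ heq
    obtain ⟨hodd, hhalf⟩ := Prod.mk.inj heq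
    ext j
    have hodd_j : Odd (a j) ↔ Odd (a' j) := by simpa [oddSet] using Finset.ext_iff.1 hodd j
    have hhalf_j : (a j - 1) / 2 = (a' j - 1) / 2 := congrFun hhalf j
    grind [ha j, ha' j]
  · rintro ⟨S, b⟩ hx
    obtain ⟨hS, hb⟩ : #S = k ∧ ∑ j, b j = r := by simpa using hx
    let a (j : ι) : ℕ := 2 * b j + if j ∈ S then 1 else 2
    have ha : ∀ j, 0 < a j := by grind
    have hodd : oddSet a = S := by ext j; grind
    have hhalf : halves a = b := by ext j; grind
    have hsum : ∑ j, a j + #(oddSet a) = 2 * (∑ j, halves a j + Fintype.card ι) :=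
      sum_add_card_filter_odd ha
    rw [hodd, hhalf] at hsum
    exact ⟨a, ⟨ha, by lia, by rw [← hS, ← hodd]⟩, by rw [hodd, hhalf]⟩

lemma ncard_pos_sum_eq_card_odd_choose_mul_choose [Nonempty ι] (h : N + k = 2 * (t + 1)) :
    {a : ι → ℕ | (∀ j, 0 < a j) ∧ ∑ j, a j = N ∧ #{j | Odd (a j)} = k}.ncard =
      (Fintype.card ι).choose k * t.choose (Fintype.card ι - 1) := by
  have hι := Fintype.card_pos (α := ι)
  rcases le_or_gt (Fintype.card ι) (t + 1) with ht | ht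
  · obtain ⟨r, hr⟩ := Nat.exists_eq_add_of_le ht
    have hchoose : t.choose (Fintype.card ι - 1) = t.choose r :=
      Nat.choose_symm_of_eq_add (by lia)
    have ht_eq : Fintype.card ι + r - 1 = t := by lia
    rw [ncard_pos_sum_eq_card_odd (r := r) (by lia), hchoose, ht_eq]
  · have hchoose : t.choose (Fintype.card ι - 1) = 0 := Nat.choose_eq_zero_of_lt (by lia)
    rw [hchoose, mul_zero]
    convert Set.ncard_empty (ι → ℕ)
    refine Set.eq_empty_of_forall_notMem ?_
    rintro a ⟨ha, hsum, hodd⟩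
    have := sum_add_card_filter_odd ha
    lia

lemma countP_ofFn {α : Type*} (p : α → Prop) [DecidablePred p] (a : Fin i → α) :
    (List.ofFn a : Multiset α).countP p = #{j | p (a j)} := by
  rw [← Fin.univ_val_map, Multiset.countP_map]
  rfl

lemma ncard_composition_card_odd_eq (hi : 0 < i) (h : N + k = 2 * (t + 1)) :
    {c : Composition N | (c.blocks : Multiset ℕ).card = i ∧
      (c.blocks : Multiset ℕ).countP (Odd ·) = k}.ncard = i.choose k * t.choose (i - 1) := by
  have : NeZero i := ⟨hi.ne'⟩
  rw [← Fintype.card_fin i, ← ncard_pos_sum_eq_card_odd_choose_mul_choose h, Fintype.card_fin]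
  symm
  refine Set.ncard_congr (fun a ha => ⟨List.ofFn a, by
    simpa [List.forall_mem_ofFn_iff] using ha.1, by rw [List.sum_ofFn, ha.2.1]⟩) ?_ ?_ ?_
  · rintro a ⟨-, -, hodd⟩
    exact ⟨List.length_ofFn, by rw [countP_ofFn, hodd]⟩
  · intro a a' _ _ heq
    exact List.ofFn_injective (congrArg Composition.blocks heq)
  · rintro c ⟨rfl, hodd⟩
    refine ⟨c.blocksFun, ⟨c.one_le_blocksFun, c.sum_blocksFun, ?_⟩, ?_⟩
    · have hcount := countP_ofFn (Odd ·) c.blocksFun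
      rw [c.ofFn_blocksFun] at hcount
      exact hcount.symm.trans hodd
    · ext1
      exact c.ofFn_blocksFun

theorem cycle_odd_block_partitions_general (hi : 2 ≤ i) (h : N + k = 2 * (t + 1)) :
    i * {π : Finset (Finset ℕ) | IsConnectedPartition (Icc 1 N) (cyclicGraph N) π ∧ #π = i ∧
      #{B ∈ π | Odd #B} = k}.ncard = N * (i.choose k * t.choose (i - 1)) := by
  rw [← ncard_composition_card_odd_eq (by lia) h,
    ← mul_ncard_isConnectedPartition_eq_mul_ncard_composition
      (P := fun M => M.card = i ∧ M.countP (Odd ·) = k) hi fun _ hM => hM.1]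
  simp only [card_blockSizes, countP_blockSizes]

end

/-- Lemma 3.5: if `N` is the number of connected partitions of the cycle graph
`O_{2n}` into `i` blocks, exactly `2m` of which have odd cardinality, then
`i · N = 2n · C(i, 2m) · C(n+m−1, i−1)`. -/
theorem cycle_odd_block_partitions (n i m : ℕ) (hn : 2 ≤ n)
    (hi2 : 2 ≤ i) (hi : i ≤ 2 * n) (hm1 : 1 ≤ m) (hm : m ≤ i / 2) :
    i * {π : Finset (Finset ℕ) |
        IsConnectedPartition (Finset.Icc 1 (2 * n)) (cycleGraph n) π ∧ π.card = i ∧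
        (π.filter (fun B => Odd B.card)).card = 2 * m}.ncard
      = 2 * n * (i.choose (2 * m) * (n + m - 1).choose (i - 1)) :=
  cycle_odd_block_partitions_general hi2 (by lia)
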